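/- Semiconcavity with linear modulus of the value function: for every open set W whose closure is compact and contained in Ω, there exists a constant C > 0 such that for all x, z ∈ X with x, x + z, x − z ∈ W, one has v(x + z) + v(x − z) − 2 v(x) ≤ C ‖z‖_M². -/

import Mathlib

open MeasureTheory Real Set Filter Topology
open scoped RealInnerProductSpace ENNReal

noncomputable section
namespace NBodyHJ

attribute [local instance] Classical.propDecidable

abbrev Conf (d N : ℕ) := Fin N → EuclideanSpace ℝ (Fin d)

variable {d N : ℕ}

/-- The mass inner product on the configuration space. -/
def minner (m : Fin N → ℝ) (x y : Conf d N) : ℝ := ∑ i, m i * ⟪x i, y i⟫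

/-- The mass norm on the configuration space. -/
def mnorm (m : Fin N → ℝ) (x : Conf d N) : ℝ := Real.sqrt (minner m x x)

/-- Membership in the zero-barycenter configuration space `X`. -/
def inX (m : Fin N → ℝ) (x : Conf d N) : Prop := ∑ i, m i • x i = 0

/-- Collision configurations. -/
def collision (x : Conf d N) : Prop := ∃ i j, i ≠ j ∧ x i = x j

/-- Membership in the collision-free zero-barycenter space `Ω`. -/
def inOmega (m : Fin N → ℝ) (x : Conf d N) : Prop := inX m x ∧ ¬ collision x

/-- The Newtonian potential (with junk value `0` for a colliding pair). -/
def U (m : Fin N → ℝ) (x : Conf d N) : ℝ :=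
  ∑ i : Fin N, ∑ j : Fin N, if i < j then m i * m j / ‖x i - x j‖ else 0

/-- The time interval `(t₀, T)`, where `T ∈ (t₀, +∞]` is extended-real. -/
def timeSet (t0 : ℝ) (T : EReal) : Set ℝ := {t : ℝ | t0 < t ∧ (t : EReal) < T}

/-- Membership of the pair (curve, derivative) `(φ, φ')` in `D₀^{1,2}(t₀, T)`:
`φ` starts at `0`, takes values in `X`, is the integral of `φ'` (hence locally
absolutely continuous), and `φ'` has finite `L²` mass norm on `(t₀, T)`. -/
def InD (m : Fin N → ℝ) (t0 : ℝ) (T : EReal) (φ φ' : ℝ → Conf d N) : Prop :=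
  φ t0 = 0 ∧
  (∀ t : ℝ, t0 ≤ t → (t : EReal) < T → inX m (φ t)) ∧
  (∀ t : ℝ, t0 ≤ t → (t : EReal) < T → φ t = ∫ s in Set.Ioc t0 t, φ' s) ∧
  (∀ t : ℝ, t0 ≤ t → (t : EReal) < T → IntegrableOn φ' (Set.Ioc t0 t)) ∧
  IntegrableOn (fun t => (mnorm m (φ' t)) ^ 2) (timeSet t0 T)

/-- The norm `‖φ‖_{D_T}`. -/
def Dnorm (m : Fin N → ℝ) (t0 : ℝ) (T : EReal) (φ' : ℝ → Conf d N) : ℝ :=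
  Real.sqrt (∫ t in timeSet t0 T, (mnorm m (φ' t)) ^ 2)

/-- The motion `γ(t) = φ(t) + t a + x - a` associated with `φ` in the hyperbolic case. -/
def hypCurve (a x : Conf d N) (φ : ℝ → Conf d N) (t : ℝ) : Conf d N :=
  φ t + t • a + x - a

/-- The integrand of the hyperbolic renormalized Lagrangian action. -/
def hypIntegrand (m : Fin N → ℝ) (a x : Conf d N) (φ φ' : ℝ → Conf d N) (t : ℝ) : ℝ :=
  (mnorm m (φ' t)) ^ 2 / 2 + U m (hypCurve a x φ t) - U m (t • a)

/-- The hyperbolic renormalized Lagrangian action `A_{x,[1,T]}(φ)`, with values in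
`ℝ ∪ {+∞}` : it equals the integral of the renormalized Lagrangian if this integrand is
integrable and the motion is a.e. collision-free, and `+∞` otherwise. -/
def hypAction (m : Fin N → ℝ) (a x : Conf d N) (T : EReal) (φ φ' : ℝ → Conf d N) : EReal :=
  if IntegrableOn (hypIntegrand m a x φ φ') (timeSet 1 T) ∧
      (∀ᵐ t ∂volume.restrict (timeSet 1 T), ¬ collision (hypCurve a x φ t))
  then ((∫ t in timeSet 1 T, hypIntegrand m a x φ φ' t : ℝ) : EReal)
  else (⊤ : EReal)

/-- The infimum of the hyperbolic renormalized action over `D₀^{1,2}(1,T)`. -/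
def hypInf (m : Fin N → ℝ) (a x : Conf d N) (T : EReal) : EReal :=
  ⨅ (φ : ℝ → Conf d N) (φ' : ℝ → Conf d N) (_ : InD m 1 T φ φ'), hypAction m a x T φ φ'

/-- The renormalized value function `v(x)` in the hyperbolic case. -/
def hypValue (m : Fin N → ℝ) (a x : Conf d N) : ℝ :=
  (hypInf m a x ⊤).toReal - minner m a x

/-!
Let `φ` be almost minimizing at `x`. Adding `± c(t) z` to the motion, where `c` decreases linearly
from `1` to `0` on `[1, 1 + δ]`, gives competitors at `x ± z`. The kinetic parts of the three
actions are related by the parallelogram law, and the second difference of the potential is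
`O(‖z‖²)` as long as the motion stays at a fixed distance from collisions; so
`v(x + z) + v(x - z) - 2 v(x)` is at most `C ‖z‖²` when `z` is small.

To choose `δ`, and the distance to collisions, uniformly for `x` in a compact set, note that the
renormalized action is coercive: `U(γ(t)) - U(a t)` is bounded below by a multiple of
`(‖φ‖_D + ‖x - a‖) t^(-3/2)`, so a bound on the action bounds `‖φ‖_D` and hence the
`1/2`-Hölder modulus of the motion. It remains to bound the infimum of the action on compact sets,
which also takes care of large `z`. Coercivity bounds it below. Since `d ≥ 2`, a motion that
goes to a generic configuration and then follows the direction `a` avoids collisions, so the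
infimum is finite at every point; a local upper bound follows from the second difference estimate,
the value at `y` being controlled by the one at its reflection through a nearby point.
-/

section Auxiliary

lemma norm_integral_sq_le {α E : Type*} [MeasurableSpace α] [NormedAddCommGroup E]
    [NormedSpace ℝ E] {ν : Measure α} [IsFiniteMeasure ν] {f : α → E} (hf : MemLp f 2 ν) :
    ‖∫ t, f t ∂ν‖ ^ 2 ≤ ν.real univ * ∫ t, ‖f t‖ ^ 2 ∂ν := by
  have hf₁ : Integrable (fun t => ‖f t‖) ν := (hf.integrable one_le_two).norm
  have hf₂ : Integrable (fun t => ‖f t‖ ^ 2) ν := hf.integrable_norm_pow two_ne_zero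
  have hquad (c : ℝ) : 0 ≤ ν.real univ * (c * c) + (-2 * ∫ t, ‖f t‖ ∂ν) * c
      + ∫ t, ‖f t‖ ^ 2 ∂ν :=
    calc 0 ≤ ∫ t, (c - ‖f t‖) ^ 2 ∂ν := integral_nonneg fun t => sq_nonneg _
      _ = ∫ t, (c * c - 2 * c * ‖f t‖ + ‖f t‖ ^ 2) ∂ν := by congr 1; ext t; ring
      _ = _ := by
        have hc : Integrable (fun t => 2 * c * ‖f t‖) ν := hf₁.const_mul _
        have hsub : Integrable (fun t => c * c - 2 * c * ‖f t‖) ν := (integrable_const _).sub hc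
        rw [integral_add hsub hf₂, integral_sub (integrable_const _) hc, integral_const,
          integral_const_mul, smul_eq_mul]
        ring
  have hdiscrim := discrim_le_zero hquad
  rw [discrim] at hdiscrim
  calc ‖∫ t, f t ∂ν‖ ^ 2 ≤ (∫ t, ‖f t‖ ∂ν) ^ 2 := by
        gcongr
        exact norm_integral_le_integral_norm f
    _ ≤ _ := by linarith

lemma integrable_indicator_Ioc_const {E : Type*} [NormedAddCommGroup E] (b c : ℝ) (v : E) :
    Integrable ((Ioc b c).indicator fun _ => v) :=
  IntegrableOn.integrable_indicator (by simp) measurableSet_Ioc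

lemma one_div_sub_one_div_add_le {p q r : ℝ} (hr : 0 < r) (hq : r ≤ q) (hp : r / 2 ≤ p) :
    1 / p - 1 / q + (p ^ 2 - q ^ 2) / (2 * q ^ 3) ≤ 5 / (2 * r ^ 3) * (p - q) ^ 2 := by
  have hq0 : 0 < q := hr.trans_le hq
  have hp0 : 0 < p := (half_pos hr).trans_le hp
  calc _ = (1 / (2 * q ^ 3) + 1 / (q ^ 2 * p)) * (p - q) ^ 2 := by
        field_simp
        ring
    _ ≤ (1 / (2 * r ^ 3) + 1 / (r ^ 2 * (r / 2))) * (p - q) ^ 2 := by gcongr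
    _ = _ := by
        field_simp
        ring

lemma div_sq_le_one_div_sub_one_div {p q : ℝ} (hp : 0 < p) (hq : 0 < q) :
    (q - p) / q ^ 2 ≤ 1 / p - 1 / q := by
  have h : 1 / p - 1 / q - (q - p) / q ^ 2 = (p - q) ^ 2 / (p * q ^ 2) := by
    field_simp
    ring
  rw [← sub_nonneg, h]
  positivity

lemma one_div_norm_second_difference_le {E : Type*} [NormedAddCommGroup E]
    [InnerProductSpace ℝ E] {u w : E} {r : ℝ} (hr : 0 < r) (hu : r ≤ ‖u‖) (hw : ‖w‖ ≤ r / 2) :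
    1 / ‖u + w‖ + 1 / ‖u - w‖ - 2 / ‖u‖ ≤ 5 / r ^ 3 * ‖w‖ ^ 2 := by
  have one_sided (p : ℝ) (hp : |p - ‖u‖| ≤ ‖w‖) :
      1 / p - 1 / ‖u‖ + (p ^ 2 - ‖u‖ ^ 2) / (2 * ‖u‖ ^ 3) ≤ 5 / (2 * r ^ 3) * ‖w‖ ^ 2 :=
    (one_div_sub_one_div_add_le hr hu (by linarith [(abs_le.1 hp).1])).trans
      (by gcongr ?_ * ?_; exact sq_le_sq.2 (by rwa [abs_norm]))
  have hadd := one_sided ‖u + w‖ (by simpa using abs_norm_sub_norm_le (u + w) u)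
  have hsub := one_sided ‖u - w‖ (by simpa using abs_norm_sub_norm_le (u - w) u)
  -- The parallelogram law makes the first-order terms add up to something nonnegative.
  have hfirst : (‖u + w‖ ^ 2 - ‖u‖ ^ 2) / (2 * ‖u‖ ^ 3)
      + (‖u - w‖ ^ 2 - ‖u‖ ^ 2) / (2 * ‖u‖ ^ 3) = ‖w‖ ^ 2 / ‖u‖ ^ 3 := by
    have hu0 : 0 < ‖u‖ := hr.trans_le hu
    field_simp
    linarith [parallelogram_law_with_norm ℝ u w]
  have hfirst_nonneg : 0 ≤ ‖w‖ ^ 2 / ‖u‖ ^ 3 := by positivity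
  calc _ = (1 / ‖u + w‖ - 1 / ‖u‖) + (1 / ‖u - w‖ - 1 / ‖u‖) := by ring
    _ ≤ 5 / (2 * r ^ 3) * ‖w‖ ^ 2 + 5 / (2 * r ^ 3) * ‖w‖ ^ 2 := by linarith
    _ = _ := by ring

lemma exists_pos_forall_le {ι : Type*} [Finite ι] {f : ι → ℝ} (hf : ∀ i, 0 < f i) :
    ∃ c > 0, ∀ i, c ≤ f i := by
  obtain ⟨c, hc, hcf⟩ := Pi.exists_forall_pos_add_lt hf
  exact ⟨c, hc, fun i => by simpa using (hcf i).le⟩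

lemma exists_forall_sub_notMem {K V ι κ : Type*} [Field K] [Infinite K] [AddCommGroup V]
    [Module K V] [Finite ι] [Finite κ] {S : κ → ι → ι → Submodule K V}
    (hS : ∀ k i j, S k i j ≠ ⊤) :
    ∃ y : ι → V, ∀ k i j, i ≠ j → y i - y j ∉ S k i j := by
  let P (q : κ × {p : ι × ι // p.1 ≠ p.2}) : Submodule K (ι → V) :=
    (S q.1 q.2.1.1 q.2.1.2).comap
      (LinearMap.proj (R := K) (φ := fun _ : ι => V) q.2.1.1 - LinearMap.proj q.2.1.2)
  have hP (q) : P q ≠ ⊤ := by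
    obtain ⟨k, ⟨i, j⟩, hij⟩ := q
    refine fun htop => hS k i j ((Submodule.eq_top_iff').2 fun e => ?_)
    have he : (Pi.single i e : ι → V) ∈ P ⟨k, ⟨i, j⟩, hij⟩ := htop ▸ Submodule.mem_top
    simpa [P, Ne.symm hij] using he
  obtain ⟨y, hy⟩ := Submodule.exists_forall_notMem_of_forall_ne_top P hP
  exact ⟨y, fun k i j hij => hy ⟨k, ⟨i, j⟩, hij⟩⟩

lemma span_singleton_ne_top_of_one_lt_finrank {K V : Type*} [DivisionRing K] [AddCommGroup V]
    [Module K V] (hV : 1 < Module.finrank K V) (u : V) : Submodule.span K {u} ≠ ⊤ := by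
  intro htop
  have h := finrank_span_le_card (R := K) ({u} : Set V)
  rw [htop, finrank_top, toFinset_singleton, Finset.card_singleton] at h
  omega

end Auxiliary

section MassNorm

variable {m : Fin N → ℝ}

/-- The total mass of the system. -/
def totalMass (m : Fin N → ℝ) : ℝ := ∑ i, m i

lemma totalMass_nonneg (hm : ∀ i, 0 ≤ m i) : 0 ≤ totalMass m :=
  Finset.sum_nonneg fun i _ => hm i

lemma mnorm_sq (hm : ∀ i, 0 ≤ m i) (x : Conf d N) : mnorm m x ^ 2 = ∑ i, m i * ‖x i‖ ^ 2 := by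
  have h : minner m x x = ∑ i, m i * ‖x i‖ ^ 2 := by simp [minner]
  rw [mnorm, h, Real.sq_sqrt (Finset.sum_nonneg fun i _ => mul_nonneg (hm i) (sq_nonneg _))]

lemma mul_norm_sq_le_mnorm_sq {μ : ℝ} (hμ : 0 < μ) (hm : ∀ i, μ ≤ m i) (x : Conf d N) :
    μ * ‖x‖ ^ 2 ≤ mnorm m x ^ 2 := by
  have hm₀ (i) : 0 ≤ m i := hμ.le.trans (hm i)
  have hx : ‖x‖ ≤ √(mnorm m x ^ 2 / μ) := by
    refine (pi_norm_le_iff_of_nonneg (Real.sqrt_nonneg _)).2 fun i => Real.le_sqrt_of_sq_le ?_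
    rw [le_div_iff₀' hμ, mnorm_sq hm₀]
    calc μ * ‖x i‖ ^ 2 ≤ m i * ‖x i‖ ^ 2 := by gcongr; exact hm i
      _ ≤ _ := Finset.single_le_sum (f := fun i => m i * ‖x i‖ ^ 2)
          (fun i _ => mul_nonneg (hm₀ i) (sq_nonneg _)) (Finset.mem_univ i)
  rw [← le_div_iff₀' hμ]
  exact (Real.le_sqrt (norm_nonneg _) (by positivity)).1 hx

lemma mnorm_sq_le (hm : ∀ i, 0 ≤ m i) (x : Conf d N) :
    mnorm m x ^ 2 ≤ totalMass m * ‖x‖ ^ 2 := by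
  rw [mnorm_sq hm, totalMass, Finset.sum_mul]
  gcongr with i _
  · exact hm i
  · exact norm_le_pi_norm x i

lemma mnorm_add_sq_add_mnorm_sub_sq (hm : ∀ i, 0 ≤ m i) (x y : Conf d N) :
    mnorm m (x + y) ^ 2 + mnorm m (x - y) ^ 2 = 2 * (mnorm m x ^ 2 + mnorm m y ^ 2) := by
  simp only [mnorm_sq hm, Finset.mul_sum, ← Finset.sum_add_distrib]
  refine Finset.sum_congr rfl fun i _ => ?_
  simp only [Pi.add_apply, Pi.sub_apply]
  linear_combination m i * parallelogram_law_with_norm ℝ (x i) (y i)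

lemma mnorm_smul (m : Fin N → ℝ) (c : ℝ) (x : Conf d N) : mnorm m (c • x) = |c| * mnorm m x := by
  have h : minner m (c • x) (c • x) = c ^ 2 * minner m x x := by
    simp only [minner, Finset.mul_sum, Pi.smul_apply, real_inner_smul_left, real_inner_smul_right]
    exact Finset.sum_congr rfl fun i _ => by ring
  rw [mnorm, h, Real.sqrt_mul (sq_nonneg c), Real.sqrt_sq_eq_abs, mnorm]

lemma continuous_mnorm (m : Fin N → ℝ) : Continuous (mnorm m : Conf d N → ℝ) := by
  unfold mnorm minner
  fun_prop

lemma minner_add_right (m : Fin N → ℝ) (a x y : Conf d N) :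
    minner m a (x + y) = minner m a x + minner m a y := by
  simp [minner, inner_add_right, mul_add, Finset.sum_add_distrib]

lemma minner_sub_right (m : Fin N → ℝ) (a x y : Conf d N) :
    minner m a (x - y) = minner m a x - minner m a y := by
  simp [minner, inner_sub_right, mul_sub, Finset.sum_sub_distrib]

lemma inX.add {x y : Conf d N} (hx : inX m x) (hy : inX m y) : inX m (x + y) := by
  simp_all [inX, smul_add, Finset.sum_add_distrib]

lemma inX.smul {x : Conf d N} (hx : inX m x) (c : ℝ) : inX m (c • x) := by
  unfold inX at *
  simp only [Pi.smul_apply, smul_comm _ c, ← Finset.smul_sum, hx, smul_zero]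

lemma inX.neg {x : Conf d N} (hx : inX m x) : inX m (-x) := by
  simpa using hx.smul (-1)

lemma inX.sub {x y : Conf d N} (hx : inX m x) (hy : inX m y) : inX m (x - y) :=
  sub_eq_add_neg x y ▸ hx.add hy.neg

lemma exists_inX_translate (hm : ∀ i, 0 < m i) (y : Conf d N) : ∃ c, inX m fun i => y i - c := by
  rcases isEmpty_or_nonempty (Fin N) with hN | hN
  · exact ⟨0, by simp [inX]⟩
  · have hM : ∑ i, m i ≠ 0 := (Finset.sum_pos (fun i _ => hm i) Finset.univ_nonempty).ne'
    refine ⟨(∑ i, m i)⁻¹ • ∑ i, m i • y i, ?_⟩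
    simp only [inX, smul_sub, Finset.sum_sub_distrib, ← Finset.sum_smul]
    rw [smul_smul, mul_inv_cancel₀ hM, one_smul, sub_self]

end MassNorm

section Separation

variable {x y : Conf d N} {r : ℝ}

/-- All mutual distances of the configuration `x` are at least `r`. For `r > 0` this is the
quantitative form of being collision-free. -/
def IsSeparated (r : ℝ) (x : Conf d N) : Prop := ∀ i j, i ≠ j → r ≤ ‖x i - x j‖

lemma not_collision_iff : ¬ collision x ↔ ∀ i j, i ≠ j → 0 < ‖x i - x j‖ := by
  simp [collision, sub_eq_zero]

lemma IsSeparated.not_collision (h : IsSeparated r x) (hr : 0 < r) : ¬ collision x :=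
  not_collision_iff.2 fun i j hij => hr.trans_le (h i j hij)

lemma IsSeparated.of_le (h : IsSeparated r x) {s : ℝ} (hs : s ≤ r) : IsSeparated s x :=
  fun i j hij => hs.trans (h i j hij)

lemma IsSeparated.smul (h : IsSeparated r x) {t : ℝ} (ht : 0 ≤ t) :
    IsSeparated (t * r) (t • x) := fun i j hij => by
  rw [Pi.smul_apply, Pi.smul_apply, ← smul_sub, norm_smul, Real.norm_of_nonneg ht]
  exact mul_le_mul_of_nonneg_left (h i j hij) ht

lemma norm_apply_sub_apply_le (x : Conf d N) (i j : Fin N) : ‖x i - x j‖ ≤ 2 * ‖x‖ := by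
  linarith [norm_sub_le (x i) (x j), norm_le_pi_norm x i, norm_le_pi_norm x j]

lemma norm_apply_sub_apply_sub_le (x y : Conf d N) (i j : Fin N) :
    ‖x i - x j‖ - ‖y i - y j‖ ≤ 2 * ‖x - y‖ := by
  have h : x i - x j - (y i - y j) = (x - y) i - (x - y) j := by
    simp only [Pi.sub_apply]
    abel
  calc _ ≤ ‖x i - x j - (y i - y j)‖ := norm_sub_norm_le _ _
    _ ≤ _ := h ▸ norm_apply_sub_apply_le (x - y) i j

lemma IsSeparated.of_norm_sub_le (h : IsSeparated r x) {s : ℝ} (hxy : ‖x - y‖ ≤ s) :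
    IsSeparated (r - 2 * s) y := fun i j hij => by
  linarith [h i j hij, norm_apply_sub_apply_sub_le x y i j]

lemma exists_isSeparated_of_isCompact {K : Set (Conf d N)} (hK : IsCompact K)
    (hc : ∀ x ∈ K, ¬ collision x) : ∃ r > 0, ∀ x ∈ K, IsSeparated r x := by
  have hpair (p : Fin N × Fin N) : ∃ r > 0, p.1 ≠ p.2 → ∀ x ∈ K, r ≤ ‖x p.1 - x p.2‖ := by
    by_cases hp : p.1 = p.2
    · exact ⟨1, one_pos, fun h => absurd hp h⟩
    · have hf : ContinuousOn (fun x : Conf d N => ‖x p.1 - x p.2‖) K := by fun_prop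
      obtain ⟨r, hr, hrK⟩ := hK.exists_forall_le' hf (a := 0)
        fun x hx => not_collision_iff.1 (hc x hx) _ _ hp
      exact ⟨r, hr, fun _ => hrK⟩
  choose R hR hRK using hpair
  obtain ⟨r, hr, hrR⟩ := exists_pos_forall_le hR
  exact ⟨r, hr, fun x hx i j hij => (hrR (i, j)).trans (hRK (i, j) hij x hx)⟩

lemma exists_isSeparated (hx : ¬ collision x) : ∃ r > 0, IsSeparated r x := by
  simpa using exists_isSeparated_of_isCompact (isCompact_singleton (x := x)) (by simpa using hx)

end Separation

section Potential

variable {m : Fin N → ℝ} {x y w : Conf d N} {r : ℝ}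

lemma continuousOn_U (m : Fin N → ℝ) :
    ContinuousOn (U m) {x : Conf d N | ¬ collision x} := by
  unfold U
  refine continuousOn_finsetSum _ fun i _ => continuousOn_finsetSum _ fun j _ => ?_
  split_ifs with hij
  · exact continuousOn_const.div (by fun_prop) fun x hx =>
      (not_collision_iff.1 hx i j hij.ne).ne'
  · exact continuousOn_const

lemma sum_sum_mul_mul_norm_sq_add (hm : ∀ i, 0 ≤ m i) (w : Conf d N) :
    ∑ i, ∑ j, m i * m j * (‖w i‖ ^ 2 + ‖w j‖ ^ 2) = 2 * totalMass m * mnorm m w ^ 2 := by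
  have h : ∑ i, ∑ j, m i * m j * (‖w i‖ ^ 2 + ‖w j‖ ^ 2)
      = ∑ i, ∑ j, (m i * ‖w i‖ ^ 2) * m j + ∑ i, ∑ j, m i * (m j * ‖w j‖ ^ 2) := by
    simp only [← Finset.sum_add_distrib]
    exact Finset.sum_congr rfl fun i _ => Finset.sum_congr rfl fun j _ => by ring
  rw [h, ← Finset.sum_mul_sum, ← Finset.sum_mul_sum, ← mnorm_sq hm, totalMass]
  ring

lemma U_second_difference_le (hm : ∀ i, 0 ≤ m i) (hr : 0 < r) (hx : IsSeparated r x)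
    (hw : ‖w‖ ≤ r / 4) :
    U m (x + w) + U m (x - w) - 2 * U m x ≤ 20 * totalMass m / r ^ 3 * mnorm m w ^ 2 := by
  have hsum : 20 * totalMass m / r ^ 3 * mnorm m w ^ 2
      = ∑ i, ∑ j, 10 / r ^ 3 * (m i * m j * (‖w i‖ ^ 2 + ‖w j‖ ^ 2)) := by
    simp only [← Finset.mul_sum, sum_sum_mul_mul_norm_sq_add hm]
    ring
  simp only [hsum, U, Finset.mul_sum, ← Finset.sum_add_distrib, ← Finset.sum_sub_distrib]
  refine Finset.sum_le_sum fun i _ => Finset.sum_le_sum fun j _ => ?_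
  have hmm : 0 ≤ m i * m j := mul_nonneg (hm i) (hm j)
  split_ifs with hij
  · have hadd : (x + w) i - (x + w) j = x i - x j + (w i - w j) := add_sub_add_comm ..
    have hsub : (x - w) i - (x - w) j = x i - x j - (w i - w j) := sub_sub_sub_comm ..
    have hkernel := one_div_norm_second_difference_le hr (hx i j hij.ne) (w := w i - w j)
      (by linarith [norm_apply_sub_apply_le w i j])
    have hpar : ‖w i - w j‖ ^ 2 ≤ 2 * (‖w i‖ ^ 2 + ‖w j‖ ^ 2) := by
      nlinarith [parallelogram_law_with_norm ℝ (w i) (w j), sq_nonneg ‖w i + w j‖]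
    calc _ = m i * m j * (1 / ‖x i - x j + (w i - w j)‖ + 1 / ‖x i - x j - (w i - w j)‖
          - 2 / ‖x i - x j‖) := by rw [hadd, hsub]; ring
      _ ≤ m i * m j * (5 / r ^ 3 * (2 * (‖w i‖ ^ 2 + ‖w j‖ ^ 2))) := by
        gcongr
        exact hkernel.trans (by gcongr)
      _ = _ := by ring
  · simp only [add_zero, mul_zero, sub_zero]
    positivity

lemma le_U_sub_U (hm : ∀ i, 0 ≤ m i) (hr : 0 < r) (hx : ¬ collision x) (hy : IsSeparated r y) :
    -(2 * totalMass m ^ 2 / r ^ 2 * ‖x - y‖) ≤ U m x - U m y := by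
  have hsum : -(2 * totalMass m ^ 2 / r ^ 2 * ‖x - y‖)
      = ∑ i, ∑ j, m i * m j * -(2 * ‖x - y‖ / r ^ 2) := by
    simp only [← Finset.sum_mul, ← Finset.sum_mul_sum, totalMass]
    ring
  simp only [hsum, U, ← Finset.sum_sub_distrib]
  refine Finset.sum_le_sum fun i _ => Finset.sum_le_sum fun j _ => ?_
  have hmm : 0 ≤ m i * m j := mul_nonneg (hm i) (hm j)
  split_ifs with hij
  · have hq := hy i j hij.ne
    have hkernel := div_sq_le_one_div_sub_one_div (not_collision_iff.1 hx i j hij.ne)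
      (hr.trans_le hq)
    have hdist : -(2 * ‖x - y‖ / r ^ 2)
        ≤ (‖y i - y j‖ - ‖x i - x j‖) / ‖y i - y j‖ ^ 2 := by
      rw [neg_le, ← neg_div, neg_sub]
      calc _ ≤ 2 * ‖x - y‖ / ‖y i - y j‖ ^ 2 := by
            gcongr
            exact norm_apply_sub_apply_sub_le x y i j
        _ ≤ _ := by gcongr
    calc _ ≤ m i * m j * (1 / ‖x i - x j‖ - 1 / ‖y i - y j‖) := by
          gcongr
          exact hdist.trans hkernel
      _ = _ := by ring
  · rw [sub_zero, mul_neg, neg_nonpos]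
    positivity

lemma abs_U_sub_U_le (hm : ∀ i, 0 ≤ m i) (hr : 0 < r) (hx : IsSeparated r x)
    (hy : IsSeparated r y) : |U m x - U m y| ≤ 2 * totalMass m ^ 2 / r ^ 2 * ‖x - y‖ := by
  have hxy := le_U_sub_U hm hr (hx.not_collision hr) hy
  have hyx := le_U_sub_U hm hr (hy.not_collision hr) hx
  rw [norm_sub_rev] at hyx
  exact abs_le.2 ⟨hxy, by linarith⟩

end Potential

section Curves

variable {m : Fin N → ℝ} {t₀ t : ℝ} {φ φ' ψ ψ' : ℝ → Conf d N}

lemma timeSet_top (t₀ : ℝ) : timeSet t₀ ⊤ = Ioi t₀ := by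
  ext t
  simp [timeSet, EReal.coe_lt_top]

lemma Dnorm_sq (m : Fin N → ℝ) (t₀ : ℝ) (φ' : ℝ → Conf d N) :
    Dnorm m t₀ ⊤ φ' ^ 2 = ∫ t in Ioi t₀, mnorm m (φ' t) ^ 2 := by
  rw [Dnorm, timeSet_top, Real.sq_sqrt (integral_nonneg fun t => sq_nonneg _)]

lemma Dnorm_nonneg (m : Fin N → ℝ) (t₀ : ℝ) (φ' : ℝ → Conf d N) : 0 ≤ Dnorm m t₀ ⊤ φ' :=
  Real.sqrt_nonneg _

lemma InD.inX (h : InD m t₀ ⊤ φ φ') (ht : t₀ ≤ t) : inX m (φ t) :=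
  h.2.1 t ht (EReal.coe_lt_top t)

lemma InD.eq_integral (h : InD m t₀ ⊤ φ φ') (ht : t₀ ≤ t) : φ t = ∫ s in Ioc t₀ t, φ' s :=
  h.2.2.1 t ht (EReal.coe_lt_top t)

lemma InD.integrableOn (h : InD m t₀ ⊤ φ φ') (ht : t₀ ≤ t) : IntegrableOn φ' (Ioc t₀ t) :=
  h.2.2.2.1 t ht (EReal.coe_lt_top t)

lemma InD.integrableOn_mnorm_sq (h : InD m t₀ ⊤ φ φ') :
    IntegrableOn (fun t => mnorm m (φ' t) ^ 2) (Ioi t₀) := by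
  simpa only [timeSet_top] using h.2.2.2.2

lemma InD.aestronglyMeasurable (h : InD m t₀ ⊤ φ φ') :
    AEStronglyMeasurable φ' (volume.restrict (Ioi t₀)) := by
  have hcover : Ioi t₀ = ⋃ n : ℕ, Ioc t₀ (t₀ + n) := by
    ext t
    obtain ⟨n, hn⟩ := exists_nat_ge (t - t₀)
    simpa using fun _ => ⟨n, by linarith⟩
  rw [hcover, aestronglyMeasurable_iUnion_iff]
  exact fun n => (h.integrableOn (by simp)).aestronglyMeasurable

lemma InD.continuousOn (h : InD m t₀ ⊤ φ φ') (ht : t₀ ≤ t) : ContinuousOn φ (Icc t₀ t) :=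
  (intervalIntegral.continuousOn_primitive (μ := volume)
    ((integrableOn_Icc_iff_integrableOn_Ioc).2 (h.integrableOn ht))).congr
    fun _ hs => h.eq_integral hs.1

lemma InD.add (hm : ∀ i, 0 ≤ m i) (h : InD m t₀ ⊤ φ φ') (k : InD m t₀ ⊤ ψ ψ') :
    InD m t₀ ⊤ (φ + ψ) (φ' + ψ') := by
  refine ⟨by simp [h.1, k.1], fun t ht _ => (h.inX ht).add (k.inX ht), fun t ht _ => ?_,
    fun t ht _ => (h.integrableOn ht).add (k.integrableOn ht), ?_⟩
  · simp only [Pi.add_apply]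
    rw [integral_add (h.integrableOn ht) (k.integrableOn ht), h.eq_integral ht, k.eq_integral ht]
  · rw [timeSet_top]
    refine Integrable.mono' ((h.integrableOn_mnorm_sq.const_mul 2).add
      (k.integrableOn_mnorm_sq.const_mul 2)) ?_ (ae_of_all _ fun t => ?_)
    · exact ((continuous_mnorm m).comp_aestronglyMeasurable
        (h.aestronglyMeasurable.add k.aestronglyMeasurable)).pow 2
    · have hpar := mnorm_add_sq_add_mnorm_sub_sq hm (φ' t) (ψ' t)
      have hsub := sq_nonneg (mnorm m (φ' t - ψ' t))
      simp only [Pi.add_apply, norm_pow, Real.norm_eq_abs, sq_abs]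
      linarith

lemma InD.norm_le {μ : ℝ} (hμ : 0 < μ) (hm : ∀ i, μ ≤ m i) (h : InD m t₀ ⊤ φ φ')
    (ht : t₀ ≤ t) : ‖φ t‖ ≤ Dnorm m t₀ ⊤ φ' / √μ * √(t - t₀) := by
  have hpointwise (s) : ‖φ' s‖ ^ 2 ≤ mnorm m (φ' s) ^ 2 / μ :=
    (le_div_iff₀' hμ).2 (mul_norm_sq_le_mnorm_sq hμ hm _)
  have hint : IntegrableOn (fun s => mnorm m (φ' s) ^ 2 / μ) (Ioi t₀) :=
    h.integrableOn_mnorm_sq.div_const μ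
  have hmeas := (h.integrableOn ht).aestronglyMeasurable
  have hL2 : MemLp φ' 2 (volume.restrict (Ioc t₀ t)) :=
    (memLp_two_iff_integrable_sq_norm hmeas).2 <|
      (hint.mono_set Ioc_subset_Ioi_self).mono' (hmeas.norm.pow 2) <|
        ae_of_all _ fun s => by simpa using hpointwise s
  have hsq : ‖φ t‖ ^ 2 ≤ (t - t₀) * (Dnorm m t₀ ⊤ φ' ^ 2 / μ) :=
    calc ‖φ t‖ ^ 2 ≤ (t - t₀) * ∫ s in Ioc t₀ t, ‖φ' s‖ ^ 2 := by
          simpa [h.eq_integral ht, ht] using norm_integral_sq_le hL2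
      _ ≤ (t - t₀) * ∫ s in Ioc t₀ t, mnorm m (φ' s) ^ 2 / μ := by
          refine mul_le_mul_of_nonneg_left ?_ (sub_nonneg.2 ht)
          exact integral_mono (hL2.integrable_norm_pow two_ne_zero)
            (hint.mono_set Ioc_subset_Ioi_self) hpointwise
      _ ≤ (t - t₀) * ∫ s in Ioi t₀, mnorm m (φ' s) ^ 2 / μ := by
          refine mul_le_mul_of_nonneg_left ?_ (sub_nonneg.2 ht)
          exact setIntegral_mono_set hint (ae_of_all _ fun s => by positivity)
            (ae_of_all _ Ioc_subset_Ioi_self)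
      _ = _ := by rw [integral_div, ← Dnorm_sq]
  refine le_of_sq_le_sq ?_ (by have := Dnorm_nonneg m t₀ φ'; positivity)
  rw [mul_pow, div_pow, Real.sq_sqrt hμ.le, Real.sq_sqrt (sub_nonneg.2 ht), mul_comm]
  exact hsq

end Curves

section Ramp

variable {m : Fin N → ℝ} {δ t : ℝ} {c z : Conf d N}

/-- The profile decreasing linearly from `1` to `0` on `[1, 1 + δ]`, and vanishing afterwards. -/
def cutoff (δ t : ℝ) : ℝ := 1 - min (t - 1) δ / δ

/-- The curve moving from `0` to `c` at constant velocity on `[1, 1 + δ]`, at rest afterwards. -/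
def ramp (δ : ℝ) (c : Conf d N) (t : ℝ) : Conf d N := (1 - cutoff δ t) • c

/-- The velocity of the curve `ramp δ c`. -/
def rampVel (δ : ℝ) (c : Conf d N) : ℝ → Conf d N := (Ioc 1 (1 + δ)).indicator fun _ => δ⁻¹ • c

lemma continuous_cutoff (δ : ℝ) : Continuous (cutoff δ) := by
  unfold cutoff
  fun_prop

lemma cutoff_mem_Icc (hδ : 0 < δ) (ht : 1 ≤ t) : cutoff δ t ∈ Icc (0 : ℝ) 1 := by
  have hle : min (t - 1) δ / δ ≤ 1 := (div_le_one hδ).2 (min_le_right _ _)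
  have hnonneg : 0 ≤ min (t - 1) δ / δ := div_nonneg (le_min (by linarith) hδ.le) hδ.le
  constructor <;> rw [cutoff] <;> linarith

lemma cutoff_of_le (ht : t ≤ 1 + δ) : cutoff δ t = 1 - (t - 1) / δ := by
  rw [cutoff, min_eq_left (by linarith)]

lemma cutoff_eq_zero (hδ : 0 < δ) (ht : 1 + δ ≤ t) : cutoff δ t = 0 := by
  rw [cutoff, min_eq_right (by linarith), div_self hδ.ne', sub_self]

lemma norm_cutoff_smul_le (hδ : 0 < δ) (ht : 1 ≤ t) (z : Conf d N) : ‖cutoff δ t • z‖ ≤ ‖z‖ := by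
  have h := cutoff_mem_Icc hδ ht
  rw [norm_smul, Real.norm_of_nonneg h.1]
  exact mul_le_of_le_one_left (norm_nonneg _) h.2

lemma mnorm_rampVel_sq (m : Fin N → ℝ) (δ : ℝ) (c : Conf d N) (t : ℝ) :
    mnorm m (rampVel δ c t) ^ 2
      = (Ioc 1 (1 + δ)).indicator (fun _ => 1 / δ ^ 2 * mnorm m c ^ 2) t := by
  by_cases ht : t ∈ Ioc 1 (1 + δ)
  · rw [rampVel, indicator_of_mem ht, indicator_of_mem ht, mnorm_smul, mul_pow, sq_abs]
    ring
  · simp [rampVel, ht, mnorm, minner]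

lemma inD_ramp (hδ : 0 < δ) (hc : inX m c) : InD m 1 ⊤ (ramp δ c) (rampVel δ c) := by
  refine ⟨by simp [ramp, cutoff, hδ.le], fun t _ _ => hc.smul _, fun t ht _ => ?_,
    fun t _ _ => (integrable_indicator_Ioc_const _ _ _).integrableOn, ?_⟩
  · have hlen : min t (1 + δ) - 1 = min (t - 1) δ := by
      rw [← min_sub_sub_right, add_sub_cancel_left]
    rw [rampVel, setIntegral_indicator measurableSet_Ioc, Ioc_inter_Ioc, max_self,
      setIntegral_const, Real.volume_real_Ioc_of_le (by simp [ht, hδ.le]), hlen, smul_smul,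
      ← div_eq_mul_inv, ramp, cutoff, sub_sub_cancel]
  · simp only [mnorm_rampVel_sq]
    exact (integrable_indicator_Ioc_const _ _ _).integrableOn

lemma rampVel_neg (δ : ℝ) (c : Conf d N) : rampVel δ (-c) = -rampVel δ c := by
  simp only [rampVel, smul_neg, ← indicator_neg']
  rfl

end Ramp

section Action

variable {m : Fin N → ℝ} {a x : Conf d N} {φ φ' : ℝ → Conf d N}

/-- The pair (curve, derivative) `(φ, φ')` is a competitor of finite action at `x` for the infimum
`hypInf m a x ⊤`. -/
structure Admissible (m : Fin N → ℝ) (a x : Conf d N) (φ φ' : ℝ → Conf d N) : Prop where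
  inD : InD m 1 ⊤ φ φ'
  integrableOn : IntegrableOn (hypIntegrand m a x φ φ') (Ioi 1)
  ae_not_collision : ∀ᵐ t ∂volume.restrict (Ioi 1), ¬ collision (hypCurve a x φ t)

/-- The real number to which the action `hypAction m a x ⊤` of an admissible pair is equal. -/
def actionIntegral (m : Fin N → ℝ) (a x : Conf d N) (φ φ' : ℝ → Conf d N) : ℝ :=
  ∫ t in Ioi 1, hypIntegrand m a x φ φ' t

lemma Admissible.hypInf_le (h : Admissible m a x φ φ') :
    hypInf m a x ⊤ ≤ (actionIntegral m a x φ φ' : EReal) := by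
  have heq : hypAction m a x ⊤ φ φ' = (actionIntegral m a x φ φ' : EReal) := by
    rw [hypAction, timeSet_top, if_pos ⟨h.integrableOn, h.ae_not_collision⟩, actionIntegral]
  exact heq ▸ iInf_le_of_le φ (iInf_le_of_le φ' (iInf_le _ h.inD))

lemma exists_admissible_of_hypInf_lt {c : ℝ} (h : hypInf m a x ⊤ < c) :
    ∃ φ φ', Admissible m a x φ φ' ∧ actionIntegral m a x φ φ' < c := by
  simp only [hypInf, iInf_lt_iff] at h
  obtain ⟨φ, φ', hD, h⟩ := h
  rw [hypAction, timeSet_top] at h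
  split_ifs at h with hfin
  · exact ⟨φ, φ', ⟨hD, hfin.1, hfin.2⟩, EReal.coe_lt_coe_iff.1 h⟩
  · exact absurd h not_top_lt

end Action

section Coercivity

variable {m : Fin N → ℝ} {a x : Conf d N} {φ φ' : ℝ → Conf d N} {μ r t : ℝ}

lemma hypCurve_sub_smul (a x : Conf d N) (φ : ℝ → Conf d N) (t : ℝ) :
    hypCurve a x φ t - t • a = φ t + (x - a) := by
  rw [hypCurve]
  abel

lemma InD.norm_hypCurve_sub_smul_le (hμ : 0 < μ) (hm : ∀ i, μ ≤ m i) (h : InD m 1 ⊤ φ φ')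
    (ht : 1 ≤ t) :
    ‖hypCurve a x φ t - t • a‖ ≤ (Dnorm m 1 ⊤ φ' / √μ + ‖x - a‖) * √t := by
  have hD := Dnorm_nonneg m 1 φ'
  rw [hypCurve_sub_smul, add_mul]
  refine (norm_add_le _ _).trans (add_le_add ((h.norm_le hμ hm ht).trans ?_) ?_)
  · gcongr
    linarith
  · exact le_mul_of_one_le_right (norm_nonneg _) (Real.one_le_sqrt.2 ht)

lemma le_U_sub_U_smul (hm : ∀ i, 0 ≤ m i) (hr : 0 < r) (ha : IsSeparated r a) (ht : 0 < t)
    {y : Conf d N} (hy : ¬ collision y) {c : ℝ} (hyc : ‖y - t • a‖ ≤ c * √t) :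
    -(2 * totalMass m ^ 2 / r ^ 2 * c * t ^ (-(3 / 2) : ℝ)) ≤ U m y - U m (t • a) := by
  have hpow : t ^ (-(3 / 2) : ℝ) = √t / t ^ 2 := by
    rw [Real.sqrt_eq_rpow, ← Real.rpow_natCast, ← Real.rpow_sub ht]
    norm_num
  refine le_trans (neg_le_neg ?_) (le_U_sub_U hm (by positivity) hy (ha.smul ht.le))
  calc _ ≤ 2 * totalMass m ^ 2 / (t * r) ^ 2 * (c * √t) := by gcongr
    _ = _ := by
      rw [hpow]
      field_simp

lemma Admissible.le_actionIntegral (hμ : 0 < μ) (hm : ∀ i, μ ≤ m i) (hr : 0 < r)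
    (ha : IsSeparated r a) (h : Admissible m a x φ φ') :
    Dnorm m 1 ⊤ φ' ^ 2 / 2
      - 4 * totalMass m ^ 2 / r ^ 2 * (Dnorm m 1 ⊤ φ' / √μ + ‖x - a‖)
      ≤ actionIntegral m a x φ φ' := by
  set c := Dnorm m 1 ⊤ φ' / √μ + ‖x - a‖
  have hkin := h.inD.integrableOn_mnorm_sq.div_const 2
  have hpow : IntegrableOn
      (fun t : ℝ => 2 * totalMass m ^ 2 / r ^ 2 * c * t ^ (-(3 / 2) : ℝ)) (Ioi 1) :=
    (integrableOn_Ioi_rpow_of_lt (by norm_num) one_pos).const_mul _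
  calc _ = ∫ t in Ioi 1, (mnorm m (φ' t) ^ 2 / 2
          - 2 * totalMass m ^ 2 / r ^ 2 * c * t ^ (-(3 / 2) : ℝ)) := by
        rw [integral_sub hkin hpow, integral_div, integral_const_mul, ← Dnorm_sq,
          integral_Ioi_rpow_of_lt (by norm_num) one_pos]
        norm_num
        ring
    _ ≤ _ := by
        refine integral_mono_ae (hkin.sub hpow) h.integrableOn ?_
        filter_upwards [h.ae_not_collision, ae_restrict_mem measurableSet_Ioi] with t hcoll ht
        have hU := le_U_sub_U_smul (fun i => hμ.le.trans (hm i)) hr ha (one_pos.trans ht) hcoll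
          (h.inD.norm_hypCurve_sub_smul_le hμ hm (le_of_lt ht))
        simp only [hypIntegrand]
        linarith

lemma exists_Dnorm_sq_le (hm : ∀ i, 0 < m i) (ha : ¬ collision a) (R : ℝ) :
    ∃ C, ∀ x, ‖x - a‖ ≤ R → ∀ φ φ', Admissible m a x φ φ' →
      Dnorm m 1 ⊤ φ' ^ 2 ≤ 4 * (actionIntegral m a x φ φ' + C) := by
  obtain ⟨μ, hμ, hμm⟩ := exists_pos_forall_le hm
  obtain ⟨r, hr, hra⟩ := exists_isSeparated ha
  set B := 4 * totalMass m ^ 2 / r ^ 2 with hB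
  refine ⟨(B / √μ) ^ 2 + B * R, fun x hx φ φ' h => ?_⟩
  have hcoercive := h.le_actionIntegral hμ hμm hr hra
  have hBR : B * ‖x - a‖ ≤ B * R := by gcongr
  have hyoung : B * (Dnorm m 1 ⊤ φ' / √μ) ≤ Dnorm m 1 ⊤ φ' ^ 2 / 4 + (B / √μ) ^ 2 := by
    rw [mul_div_left_comm]
    linarith [sq_nonneg (Dnorm m 1 ⊤ φ' / 2 - B / √μ)]
  rw [← hB] at hcoercive
  linarith

lemma exists_le_hypInf (hm : ∀ i, 0 < m i) (ha : ¬ collision a) (R : ℝ) :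
    ∃ C : ℝ, ∀ x, ‖x - a‖ ≤ R → (C : EReal) ≤ hypInf m a x ⊤ := by
  obtain ⟨C, hC⟩ := exists_Dnorm_sq_le hm ha R
  refine ⟨-C, fun x hx => le_of_not_gt fun hlt => ?_⟩
  obtain ⟨φ, φ', h, hA⟩ := exists_admissible_of_hypInf_lt hlt
  linarith [hC x hx φ φ' h, sq_nonneg (Dnorm m 1 ⊤ φ')]

end Coercivity

section Perturbation

variable {m : Fin N → ℝ} {a x z : Conf d N} {φ φ' : ℝ → Conf d N} {δ r t : ℝ}

lemma hypCurve_add_ramp (a x z : Conf d N) (φ : ℝ → Conf d N) (δ t : ℝ) :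
    hypCurve a (x + z) (φ + ramp δ (-z)) t = hypCurve a x φ t + cutoff δ t • z := by
  simp only [hypCurve, Pi.add_apply, ramp]
  module

lemma hypCurve_sub_ramp (a x z : Conf d N) (φ : ℝ → Conf d N) (δ t : ℝ) :
    hypCurve a (x - z) (φ + ramp δ z) t = hypCurve a x φ t - cutoff δ t • z := by
  simpa [← sub_eq_add_neg] using hypCurve_add_ramp a x (-z) φ δ t

lemma InD.continuousOn_hypCurve (h : InD m 1 ⊤ φ φ') (a x : Conf d N) (ht : 1 ≤ t) :
    ContinuousOn (hypCurve a x φ) (Icc 1 t) := by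
  have hφ := h.continuousOn ht
  unfold hypCurve
  fun_prop

lemma not_collision_hypCurve_add_cutoff (hδ : 0 < δ) (hr : 0 < r)
    (hsep : ∀ t ∈ Icc 1 (1 + δ), IsSeparated r (hypCurve a x φ t)) (hz : ‖z‖ ≤ r / 4)
    (ht : t ∈ Icc 1 (1 + δ)) : ¬ collision (hypCurve a x φ t + cutoff δ t • z) := by
  refine ((hsep t ht).of_norm_sub_le (s := r / 4) ?_).not_collision (by linarith)
  simpa using (norm_cutoff_smul_le hδ ht.1 z).trans hz

lemma integrableOn_U_perturbed_sub (hδ : 0 < δ) (hr : 0 < r) (h : InD m 1 ⊤ φ φ')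
    (hsep : ∀ t ∈ Icc 1 (1 + δ), IsSeparated r (hypCurve a x φ t)) (hz : ‖z‖ ≤ r / 4) :
    IntegrableOn
      (fun t => U m (hypCurve a x φ t + cutoff δ t • z) - U m (hypCurve a x φ t)) (Ioi 1) := by
  have hγ := h.continuousOn_hypCurve a x (t := 1 + δ) (by linarith)
  have hcut := continuous_cutoff δ
  have hcont : ContinuousOn
      (fun t => U m (hypCurve a x φ t + cutoff δ t • z) - U m (hypCurve a x φ t))
      (Icc 1 (1 + δ)) :=
    ((continuousOn_U m).comp (by fun_prop) fun t ht =>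
      not_collision_hypCurve_add_cutoff hδ hr hsep hz ht).sub
      ((continuousOn_U m).comp hγ fun t ht => (hsep t ht).not_collision hr)
  refine hcont.integrableOn_Icc.of_forall_sdiff_eq_zero measurableSet_Ioi fun t ht => ?_
  have ht' : 1 + δ ≤ t := le_of_not_ge fun hle => ht.2 ⟨le_of_lt ht.1, hle⟩
  simp [cutoff_eq_zero hδ ht']

lemma Admissible.perturb (hm : ∀ i, 0 ≤ m i) (hδ : 0 < δ) (hr : 0 < r)
    (h : Admissible m a x φ φ')
    (hsep : ∀ t ∈ Icc 1 (1 + δ), IsSeparated r (hypCurve a x φ t)) (hzX : inX m z)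
    (hz : ‖z‖ ≤ r / 4) :
    Admissible m a (x + z) (φ + ramp δ (-z)) (φ' + rampVel δ (-z)) := by
  have hD := h.inD.add hm (inD_ramp hδ hzX.neg)
  refine ⟨hD, ?_, ?_⟩
  · have hkin := (hD.integrableOn_mnorm_sq.sub h.inD.integrableOn_mnorm_sq).div_const 2
    have hpot := integrableOn_U_perturbed_sub hδ hr h.inD hsep hz
    refine ((h.integrableOn.add hkin).add hpot).congr_fun (fun t _ => ?_) measurableSet_Ioi
    simp only [Pi.add_apply, Pi.sub_apply, hypIntegrand, hypCurve_add_ramp]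
    ring
  · filter_upwards [h.ae_not_collision, ae_restrict_mem measurableSet_Ioi] with t hcoll ht
    rw [hypCurve_add_ramp]
    rcases le_total t (1 + δ) with hle | hle
    · exact not_collision_hypCurve_add_cutoff hδ hr hsep hz ⟨le_of_lt ht, hle⟩
    · simpa [cutoff_eq_zero hδ hle] using hcoll

lemma hypIntegrand_second_difference_le (hm : ∀ i, 0 ≤ m i) (hδ : 0 < δ) (hr : 0 < r)
    (hsep : ∀ t ∈ Icc 1 (1 + δ), IsSeparated r (hypCurve a x φ t)) (hz : ‖z‖ ≤ r / 4)
    (ht : 1 < t) :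
    hypIntegrand m a (x + z) (φ + ramp δ (-z)) (φ' + rampVel δ (-z)) t
      + hypIntegrand m a (x - z) (φ + ramp δ z) (φ' + rampVel δ z) t
      ≤ 2 * hypIntegrand m a x φ φ' t + (Ioc 1 (1 + δ)).indicator
        (fun _ => (1 / δ ^ 2 + 20 * totalMass m / r ^ 3) * mnorm m z ^ 2) t := by
  have hkin := mnorm_add_sq_add_mnorm_sub_sq hm (φ' t) (rampVel δ z t)
  have hvel := mnorm_rampVel_sq m δ z t
  simp only [hypIntegrand, hypCurve_add_ramp, hypCurve_sub_ramp, rampVel_neg, Pi.add_apply,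
    Pi.neg_apply, ← sub_eq_add_neg]
  by_cases htm : t ∈ Ioc 1 (1 + δ)
  · have hU := U_second_difference_le hm hr (hsep t (Ioc_subset_Icc_self htm))
      ((norm_cutoff_smul_le hδ ht.le z).trans hz)
    have hcut : mnorm m (cutoff δ t • z) ^ 2 ≤ mnorm m z ^ 2 := by
      have hmem := cutoff_mem_Icc hδ ht.le
      rw [mnorm_smul, mul_pow, sq_abs]
      exact mul_le_of_le_one_left (sq_nonneg _) (pow_le_one₀ hmem.1 hmem.2)
    have hpot : 20 * totalMass m / r ^ 3 * mnorm m (cutoff δ t • z) ^ 2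
        ≤ 20 * totalMass m / r ^ 3 * mnorm m z ^ 2 := by
      have hM := totalMass_nonneg hm
      gcongr
    rw [indicator_of_mem htm] at hvel ⊢
    linarith
  · have ht' : 1 + δ ≤ t := le_of_not_ge fun hle => htm ⟨ht, hle⟩
    rw [indicator_of_notMem htm] at hvel ⊢
    simp only [cutoff_eq_zero hδ ht', zero_smul, add_zero, sub_zero]
    linarith

lemma Admissible.hypInf_add_hypInf_le (hm : ∀ i, 0 ≤ m i) (hδ : 0 < δ) (hr : 0 < r)
    (h : Admissible m a x φ φ')
    (hsep : ∀ t ∈ Icc 1 (1 + δ), IsSeparated r (hypCurve a x φ t)) (hzX : inX m z)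
    (hz : ‖z‖ ≤ r / 4) :
    hypInf m a (x + z) ⊤ + hypInf m a (x - z) ⊤ ≤ ((2 * actionIntegral m a x φ φ'
      + δ * (1 / δ ^ 2 + 20 * totalMass m / r ^ 3) * mnorm m z ^ 2 : ℝ) : EReal) := by
  set C := (1 / δ ^ 2 + 20 * totalMass m / r ^ 3) * mnorm m z ^ 2 with hC
  have hp := h.perturb hm hδ hr hsep hzX hz
  have hn : Admissible m a (x - z) (φ + ramp δ z) (φ' + rampVel δ z) := by
    simpa [← sub_eq_add_neg] using h.perturb hm hδ hr hsep hzX.neg (by rwa [norm_neg])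
  have hind : IntegrableOn ((Ioc 1 (1 + δ)).indicator fun _ => C) (Ioi 1) :=
    (integrable_indicator_Ioc_const _ _ _).integrableOn
  have hindVal : ∫ t in Ioi 1, (Ioc 1 (1 + δ)).indicator (fun _ => C) t = δ * C := by
    rw [setIntegral_indicator measurableSet_Ioc, inter_eq_right.2 Ioc_subset_Ioi_self,
      setIntegral_const, Real.volume_real_Ioc_of_le (by linarith), add_sub_cancel_left,
      smul_eq_mul]
  rw [mul_assoc δ, ← hC]
  refine (add_le_add hp.hypInf_le hn.hypInf_le).trans ?_
  rw [← EReal.coe_add, EReal.coe_le_coe_iff]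
  calc _ = ∫ t in Ioi 1, (hypIntegrand m a (x + z) (φ + ramp δ (-z)) (φ' + rampVel δ (-z)) t
          + hypIntegrand m a (x - z) (φ + ramp δ z) (φ' + rampVel δ z) t) :=
        (integral_add hp.integrableOn hn.integrableOn).symm
    _ ≤ ∫ t in Ioi 1,
          (2 * hypIntegrand m a x φ φ' t + (Ioc 1 (1 + δ)).indicator (fun _ => C) t) :=
        setIntegral_mono_on (hp.integrableOn.add hn.integrableOn)
          ((h.integrableOn.const_mul 2).add hind) measurableSet_Ioi fun t ht =>
          hypIntegrand_second_difference_le hm hδ hr hsep hz ht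
    _ = _ := by
        rw [integral_add (h.integrableOn.const_mul 2) hind, integral_const_mul, hindVal,
          actionIntegral]

end Perturbation

section UniformSeparation

variable {m : Fin N → ℝ} {a : Conf d N} {φ φ' : ℝ → Conf d N} {μ t : ℝ} {K : Set (Conf d N)}

lemma InD.norm_hypCurve_sub_le (hμ : 0 < μ) (hm : ∀ i, μ ≤ m i) (h : InD m 1 ⊤ φ φ')
    (a x : Conf d N) (ht : 1 ≤ t) :
    ‖hypCurve a x φ t - x‖ ≤ Dnorm m 1 ⊤ φ' / √μ * √(t - 1) + (t - 1) * ‖a‖ := by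
  have heq : hypCurve a x φ t - x = φ t + (t - 1) • a := by
    simp only [hypCurve]
    module
  calc _ ≤ ‖φ t‖ + (t - 1) * ‖a‖ := by
        rw [heq, ← norm_smul_of_nonneg (sub_nonneg.2 ht)]
        exact norm_add_le _ _
    _ ≤ _ := by
        gcongr
        exact h.norm_le hμ hm ht

lemma exists_isSeparated_hypCurve (hm : ∀ i, 0 < m i) (ha : ¬ collision a) (hK : IsCompact K)
    (hKc : ∀ x ∈ K, ¬ collision x) (L : ℝ) :
    ∃ δ > 0, ∃ r > 0, ∀ x ∈ K, ∀ φ φ', Admissible m a x φ φ' → actionIntegral m a x φ φ' ≤ L →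
      ∀ t ∈ Icc 1 (1 + δ), IsSeparated r (hypCurve a x φ t) := by
  obtain ⟨μ, hμ, hμm⟩ := exists_pos_forall_le hm
  obtain ⟨r, hr, hrK⟩ := exists_isSeparated_of_isCompact hK hKc
  obtain ⟨R, hR⟩ := hK.isBounded.subset_closedBall a
  obtain ⟨C, hC⟩ := exists_Dnorm_sq_le hm ha R
  set E := √(4 * (L + C))
  obtain ⟨δ, hδr, hδ⟩ : ∃ δ, E / √μ * √δ + δ * ‖a‖ < r / 4 ∧ 0 < δ := by
    have hcont : ContinuousAt (fun s => E / √μ * √s + s * ‖a‖) 0 := by fun_prop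
    have hlim : ∀ᶠ s in 𝓝[>] (0 : ℝ), E / √μ * √s + s * ‖a‖ < r / 4 :=
      (hcont.mono_left nhdsWithin_le_nhds).eventually_lt_const (by simpa using hr)
    exact (hlim.and self_mem_nhdsWithin).exists
  refine ⟨δ, hδ, r - 2 * (r / 4), by linarith, fun x hx φ φ' h hL t ht => ?_⟩
  refine (hrK x hx).of_norm_sub_le ?_
  have hE : Dnorm m 1 ⊤ φ' ≤ E := Real.le_sqrt_of_sq_le <|
    (hC x (by simpa [dist_eq_norm] using hR hx) φ φ' h).trans (by linarith)
  have htδ : t - 1 ≤ δ := by linarith [ht.2]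
  calc ‖x - hypCurve a x φ t‖ ≤ Dnorm m 1 ⊤ φ' / √μ * √(t - 1) + (t - 1) * ‖a‖ := by
        rw [norm_sub_rev]
        exact h.inD.norm_hypCurve_sub_le hμ hμm a x ht.1
    _ ≤ E / √μ * √δ + δ * ‖a‖ := by gcongr
    _ ≤ r / 4 := hδr.le

lemma exists_hypInf_add_hypInf_le (hm : ∀ i, 0 < m i) (ha : ¬ collision a) (hK : IsCompact K)
    (hKc : ∀ x ∈ K, ¬ collision x) (L : ℝ) :
    ∃ ρ > 0, ∃ C, 0 ≤ C ∧ ∀ x ∈ K, ∀ q < L, hypInf m a x ⊤ ≤ (q : EReal) →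
      ∀ z, inX m z → ‖z‖ ≤ ρ →
        hypInf m a (x + z) ⊤ + hypInf m a (x - z) ⊤
          ≤ ((2 * q + C * mnorm m z ^ 2 : ℝ) : EReal) := by
  obtain ⟨δ, hδ, r, hr, hsep⟩ := exists_isSeparated_hypCurve hm ha hK hKc L
  have hM := totalMass_nonneg fun i => (hm i).le
  refine ⟨r / 4, by positivity, δ * (1 / δ ^ 2 + 20 * totalMass m / r ^ 3), by positivity,
    fun x hx q hqL hq z hzX hz => EReal.le_of_forall_lt_iff_le.1 fun w hw => ?_⟩
  rw [EReal.coe_lt_coe_iff, ← lt_sub_iff_add_lt, ← lt_div_iff₀' two_pos] at hw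
  obtain ⟨q', hqq', hq'⟩ := exists_between (lt_min hqL hw)
  obtain ⟨φ, φ', h, hA⟩ := exists_admissible_of_hypInf_lt
    (hq.trans_lt (EReal.coe_lt_coe_iff.2 hqq'))
  refine (h.hypInf_add_hypInf_le (fun i => (hm i).le) hδ hr
    (hsep x hx φ φ' h (hA.le.trans (hq'.le.trans (min_le_left _ _)))) hzX hz).trans ?_
  rw [EReal.coe_le_coe_iff]
  linarith [min_le_right L ((w - δ * (1 / δ ^ 2 + 20 * totalMass m / r ^ 3) * mnorm m z ^ 2) / 2)]

end UniformSeparation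

section FiniteAction

variable {m : Fin N → ℝ} {a x y : Conf d N}

/-- No mutual difference `y i - y j` is parallel to the corresponding difference `x i - x j`, so
that the line through `y` with direction `x` and, if `x` is collision-free, the line joining `x`
to `y` avoid collisions. -/
def Transversal (y x : Conf d N) : Prop :=
  ∀ i j, i ≠ j → y i - y j ∉ Submodule.span ℝ {x i - x j}

lemma exists_transversal (hd : 2 ≤ d) (hm : ∀ i, 0 < m i) (x a : Conf d N) :
    ∃ y, inX m y ∧ Transversal y x ∧ Transversal y a := by
  obtain ⟨y, hy⟩ := exists_forall_sub_notMem (κ := Bool)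
    (S := fun k i j => Submodule.span ℝ {cond k (x i - x j) (a i - a j)}) fun k i j =>
      span_singleton_ne_top_of_one_lt_finrank (by rw [finrank_euclideanSpace_fin]; omega) _
  obtain ⟨c, hc⟩ := exists_inX_translate hm y
  refine ⟨_, hc, fun i j hij => ?_, fun i j hij => ?_⟩ <;> rw [sub_sub_sub_cancel_right]
  exacts [hy true i j hij, hy false i j hij]

lemma Transversal.not_collision_segment (h : Transversal y x) (hx : ¬ collision x) (s : ℝ) :
    ¬ collision ((1 - s) • x + s • y) := by
  rintro ⟨i, j, hij, heq⟩
  have hsmul : s • (y i - y j) = (s - 1) • (x i - x j) := by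
    simp only [Pi.add_apply, Pi.smul_apply] at heq
    rw [← sub_eq_zero] at heq ⊢
    rw [← heq]
    module
  rcases eq_or_ne s 0 with rfl | hs
  · exact hx ⟨i, j, hij, by simpa [sub_eq_zero, eq_comm] using hsmul⟩
  · refine h i j hij (Submodule.mem_span_singleton.2 ⟨s⁻¹ * (s - 1), ?_⟩)
    rw [mul_smul, ← hsmul, inv_smul_smul₀ hs]

lemma Transversal.not_collision_add_smul (h : Transversal y a) (s : ℝ) :
    ¬ collision (y + s • a) := by
  rintro ⟨i, j, hij, heq⟩
  refine h i j hij (Submodule.mem_span_singleton.2 ⟨-s, ?_⟩)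
  simp only [Pi.add_apply, Pi.smul_apply] at heq
  rw [← sub_eq_zero] at heq
  rw [← sub_eq_zero, ← neg_eq_zero, ← heq]
  module

lemma not_collision_hypCurve_ramp (hx : ¬ collision x) (hyx : Transversal y x)
    (hya : Transversal y a) (t : ℝ) : ¬ collision (hypCurve a x (ramp 1 (y - x - a)) t) := by
  rcases le_total t (1 + 1) with ht | ht
  · have hseg : hypCurve a x (ramp 1 (y - x - a)) t = (1 - (t - 1)) • x + (t - 1) • y := by
      rw [hypCurve, ramp, cutoff_of_le ht]
      module
    exact hseg ▸ hyx.not_collision_segment hx _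
  · have hray : hypCurve a x (ramp 1 (y - x - a)) t = y + (t - 2) • a := by
      rw [hypCurve, ramp, cutoff_eq_zero one_pos ht]
      module
    exact hray ▸ hya.not_collision_add_smul _

lemma integrableOn_U_sub_U_smul (hm : ∀ i, 0 ≤ m i) (ha : ¬ collision a) {γ : ℝ → Conf d N}
    (hγ : ContinuousOn γ (Ici 1)) (hγc : ∀ t ∈ Ici 1, ¬ collision (γ t)) {c : ℝ}
    (hclose : ∀ t ∈ Ici 1, ‖γ t - t • a‖ ≤ c) :
    IntegrableOn (fun t => U m (γ t) - U m (t • a)) (Ioi 1) := by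
  obtain ⟨r, hr, har⟩ := exists_isSeparated ha
  have hcont : ContinuousOn (fun t => U m (γ t) - U m (t • a)) (Ici 1) := by
    refine ((continuousOn_U m).comp hγ hγc).sub ((continuousOn_U m).comp (by fun_prop) ?_)
    intro t ht
    have ht₀ : 0 < t := one_pos.trans_le ht
    exact (har.smul ht₀.le).not_collision (by positivity)
  have hbigO : (fun t => U m (γ t) - U m (t • a)) =O[atTop] fun t => t ^ (-2 : ℝ) := by
    refine Asymptotics.IsBigO.of_bound (2 * totalMass m ^ 2 / (r / 2) ^ 2 * c) ?_
    filter_upwards [eventually_ge_atTop 1, eventually_ge_atTop (4 * c / r)] with t ht htc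
    have ht₀ : 0 < t := one_pos.trans_le ht
    have hsep : IsSeparated (t * (r / 2)) (t • a) :=
      (har.of_le (by linarith)).smul ht₀.le
    have hsepγ : IsSeparated (t * (r / 2)) (γ t) := by
      rw [div_le_iff₀ hr] at htc
      have hdist : ‖t • a - γ t‖ ≤ c := (norm_sub_rev _ _).trans_le (hclose t ht)
      exact ((har.smul ht₀.le).of_norm_sub_le hdist).of_le (by linarith)
    rw [Real.norm_eq_abs, Real.norm_of_nonneg (by positivity), Real.rpow_neg ht₀.le,
      Real.rpow_two]
    calc _ ≤ 2 * totalMass m ^ 2 / (t * (r / 2)) ^ 2 * ‖γ t - t • a‖ :=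
          abs_U_sub_U_le hm (by positivity) hsepγ hsep
      _ ≤ 2 * totalMass m ^ 2 / (t * (r / 2)) ^ 2 * c := by
          gcongr
          exact hclose t ht
      _ = _ := by field_simp
  exact ((hcont.locallyIntegrableOn measurableSet_Ici).integrableOn_of_isBigO_atTop hbigO
    (integrableAtFilter_rpow_atTop_iff.2 (by norm_num))).mono_set Ioi_subset_Ici_self

lemma exists_admissible (hd : 2 ≤ d) (hm : ∀ i, 0 < m i) (ha : inOmega m a) (hx : inOmega m x) :
    ∃ φ φ', Admissible m a x φ φ' := by
  obtain ⟨y, hyX, hyx, hya⟩ := exists_transversal hd hm x a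
  have hD : InD m 1 ⊤ (ramp 1 (y - x - a)) (rampVel 1 (y - x - a)) :=
    inD_ramp one_pos ((hyX.sub hx.1).sub ha.1)
  have hcoll := not_collision_hypCurve_ramp hx.2 hyx hya
  have hcont : Continuous (hypCurve a x (ramp 1 (y - x - a))) := by
    have hcut := continuous_cutoff 1
    unfold hypCurve ramp
    fun_prop
  have hclose (t : ℝ) (ht : t ∈ Ici 1) :
      ‖hypCurve a x (ramp 1 (y - x - a)) t - t • a‖ ≤ ‖y - x - a‖ + ‖x - a‖ := by
    have hmem := cutoff_mem_Icc one_pos ht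
    rw [hypCurve_sub_smul, ramp]
    refine (norm_add_le _ _).trans (add_le_add_left ?_ _)
    rw [norm_smul_of_nonneg (sub_nonneg.2 hmem.2)]
    exact mul_le_of_le_one_left (norm_nonneg _) (by linarith [hmem.1])
  have hkin := hD.integrableOn_mnorm_sq.div_const 2
  have hpot := integrableOn_U_sub_U_smul (fun i => (hm i).le) ha.2 hcont.continuousOn
    (fun t _ => hcoll t) hclose
  refine ⟨_, _, hD, IntegrableOn.congr_fun (hkin.add hpot) (fun t _ => ?_) measurableSet_Ioi,
    ae_of_all _ hcoll⟩
  simp only [Pi.add_apply, hypIntegrand]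
  ring

end FiniteAction

section Bounds

variable {m : Fin N → ℝ} {a x : Conf d N} {K : Set (Conf d N)}

lemma exists_hypInf_le_of_norm_sub_le (hd : 2 ≤ d) (hm : ∀ i, 0 < m i) (ha : inOmega m a)
    (hx : inOmega m x) :
    ∃ ρ > 0, ∃ B : ℝ, ∀ y, inX m y → ‖y - x‖ ≤ ρ → hypInf m a y ⊤ ≤ (B : EReal) := by
  obtain ⟨φ, φ', h⟩ := exists_admissible hd hm ha hx
  set q := actionIntegral m a x φ φ'
  obtain ⟨ρ, hρ, C, hC, hsecond⟩ := exists_hypInf_add_hypInf_le hm ha.2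
    (isCompact_singleton (x := x)) (by simpa using hx.2) (q + 1)
  obtain ⟨B, hB⟩ := exists_le_hypInf hm ha.2 (‖x - a‖ + ρ)
  refine ⟨ρ, hρ, 2 * q + C * (totalMass m * ρ ^ 2) - B, fun y hyX hy => ?_⟩
  -- The value at `y` is controlled by the one at its reflection through `x`.
  have hsum := hsecond x rfl q (lt_add_one q) h.hypInf_le (y - x) (hyX.sub hx.1) hy
  have hreflect : (B : EReal) ≤ hypInf m a (x - (y - x)) ⊤ := hB _ <|
    calc _ = ‖x - a - (y - x)‖ := by rw [sub_right_comm]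
      _ ≤ _ := (norm_sub_le _ _).trans (by gcongr)
  rw [add_sub_cancel] at hsum
  have hmnorm : mnorm m (y - x) ^ 2 ≤ totalMass m * ρ ^ 2 :=
    (mnorm_sq_le (fun i => (hm i).le) _).trans
      (by have := totalMass_nonneg fun i => (hm i).le; gcongr)
  rw [EReal.coe_sub, EReal.le_sub_iff_add_le (.inl (EReal.coe_ne_bot _))
    (.inl (EReal.coe_ne_top _))]
  refine ((add_le_add_right hreflect _).trans hsum).trans (EReal.coe_le_coe_iff.2 ?_)
  gcongr

lemma exists_hypInf_le_of_isCompact (hd : 2 ≤ d) (hm : ∀ i, 0 < m i) (ha : inOmega m a)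
    (hK : IsCompact K) (hKΩ : ∀ x ∈ K, inOmega m x) :
    ∃ B : ℝ, ∀ x ∈ K, hypInf m a x ⊤ ≤ (B : EReal) := by
  refine hK.induction_on (p := fun s => ∃ B : ℝ, ∀ x ∈ s, hypInf m a x ⊤ ≤ (B : EReal))
    ⟨0, by simp⟩ (fun s t hst ⟨B, hB⟩ => ⟨B, fun x hx => hB x (hst hx)⟩) ?_ fun x hx => ?_
  · rintro s t ⟨B, hB⟩ ⟨B', hB'⟩
    refine ⟨max B B', fun x hx => hx.elim (fun h => (hB x h).trans ?_) fun h => (hB' x h).trans ?_⟩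
    · exact EReal.coe_le_coe_iff.2 (le_max_left _ _)
    · exact EReal.coe_le_coe_iff.2 (le_max_right _ _)
  · obtain ⟨ρ, hρ, B, hB⟩ := exists_hypInf_le_of_norm_sub_le hd hm ha (hKΩ x hx)
    exact ⟨K ∩ Metric.closedBall x ρ, inter_mem self_mem_nhdsWithin
      (mem_nhdsWithin_of_mem_nhds (Metric.closedBall_mem_nhds x hρ)), B, fun y hy =>
        hB y (hKΩ y hy.1).1 (by simpa [dist_eq_norm] using hy.2)⟩

lemma exists_hypInf_eq_coe_abs_le (hd : 2 ≤ d) (hm : ∀ i, 0 < m i) (ha : inOmega m a)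
    (hK : IsCompact K) (hKΩ : ∀ x ∈ K, inOmega m x) :
    ∃ B : ℝ, ∀ x ∈ K, ∃ q : ℝ, hypInf m a x ⊤ = q ∧ |q| ≤ B := by
  obtain ⟨R, hR⟩ := hK.isBounded.subset_closedBall a
  obtain ⟨B₁, hB₁⟩ := exists_le_hypInf hm ha.2 R
  obtain ⟨B₂, hB₂⟩ := exists_hypInf_le_of_isCompact hd hm ha hK hKΩ
  refine ⟨max |B₁| |B₂|, fun x hx => ?_⟩
  have hlower := hB₁ x (by simpa [dist_eq_norm] using hR hx)
  have hupper := hB₂ x hx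
  lift hypInf m a x ⊤ to ℝ using ⟨ne_top_of_le_ne_top (EReal.coe_ne_top _) hupper,
    ne_bot_of_le_ne_bot (EReal.coe_ne_bot _) hlower⟩ with q
  rw [EReal.coe_le_coe_iff] at hlower hupper
  exact ⟨q, rfl, abs_le_max_abs_abs hlower hupper⟩

lemma exists_second_difference_le_of_abs_le (hm : ∀ i, 0 < m i) {f : Conf d N → ℝ} {B C ρ : ℝ}
    (hρ : 0 < ρ) (hf : ∀ x ∈ K, |f x| ≤ B)
    (hloc : ∀ x z, x ∈ K → x + z ∈ K → x - z ∈ K → ‖z‖ ≤ ρ →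
      f (x + z) + f (x - z) - 2 * f x ≤ C * mnorm m z ^ 2) :
    ∃ C' > 0, ∀ x z, x ∈ K → x + z ∈ K → x - z ∈ K →
      f (x + z) + f (x - z) - 2 * f x ≤ C' * mnorm m z ^ 2 := by
  obtain ⟨μ, hμ, hμm⟩ := exists_pos_forall_le hm
  refine ⟨max 1 (max C (4 * B / (μ * ρ ^ 2))), by positivity, fun x z hx hxp hxn => ?_⟩
  rcases le_or_gt ‖z‖ ρ with hz | hz
  · refine (hloc x z hx hxp hxn hz).trans ?_
    gcongr
    exact (le_max_left _ _).trans (le_max_right _ _)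
  · calc _ ≤ 4 * B := by
          linarith [(abs_le.1 (hf x hx)).1, (abs_le.1 (hf _ hxp)).2, (abs_le.1 (hf _ hxn)).2]
      _ = 4 * B / (μ * ρ ^ 2) * (μ * ρ ^ 2) := by field_simp
      _ ≤ _ := by
          gcongr
          · exact (le_max_right _ _).trans (le_max_right _ _)
          · exact le_trans (by gcongr) (mul_norm_sq_le_mnorm_sq hμ hμm z)

lemma hypValue_second_difference (m : Fin N → ℝ) (a x z : Conf d N) :
    hypValue m a (x + z) + hypValue m a (x - z) - 2 * hypValue m a x
      = (hypInf m a (x + z) ⊤).toReal + (hypInf m a (x - z) ⊤).toReal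
        - 2 * (hypInf m a x ⊤).toReal := by
  simp only [hypValue, minner_add_right, minner_sub_right]
  ring

end Bounds

theorem value_function_semiconcave_general (hd : 2 ≤ d) {m : Fin N → ℝ} (hm : ∀ i, 0 < m i)
    {a : Conf d N} (ha : inOmega m a) {K : Set (Conf d N)} (hK : IsCompact K)
    (hKΩ : ∀ x ∈ K, inOmega m x) :
    ∃ C > (0 : ℝ), ∀ x z : Conf d N, x ∈ K → x + z ∈ K → x - z ∈ K →
      hypValue m a (x + z) + hypValue m a (x - z) - 2 * hypValue m a x ≤ C * mnorm m z ^ 2 := by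
  obtain ⟨B, hB⟩ := exists_hypInf_eq_coe_abs_le hd hm ha hK hKΩ
  obtain ⟨ρ, hρ, C, -, hC⟩ :=
    exists_hypInf_add_hypInf_le hm ha.2 hK (fun x hx => (hKΩ x hx).2) (B + 1)
  simp only [hypValue_second_difference]
  refine exists_second_difference_le_of_abs_le hm (f := fun x => (hypInf m a x ⊤).toReal)
    (B := B) (C := C) hρ (fun x hx => ?_) fun x z hx hxp hxn hz => ?_
  · obtain ⟨q, hq, hqB⟩ := hB x hx
    simpa only [hq, EReal.toReal_coe] using hqB
  · obtain ⟨q, hq, hqB⟩ := hB x hx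
    obtain ⟨qp, hqp, -⟩ := hB _ hxp
    obtain ⟨qn, hqn, -⟩ := hB _ hxn
    have hzX : inX m z := by simpa using (hKΩ _ hxp).1.sub (hKΩ x hx).1
    have hsum := hC x hx q (by linarith [le_abs_self q]) hq.le z hzX hz
    rw [hqp, hqn, ← EReal.coe_add, EReal.coe_le_coe_iff] at hsum
    simp only [hq, hqp, hqn, EReal.toReal_coe]
    linarith

/-- **Semiconcavity with linear modulus of the value function** : for every relatively open
set `W ⊆ X` (i.e. `W = V ∩ X` with `V` open in the ambient space) whose closure is compact
and contained in `Ω`, there is `C > 0` such that for all `x, z` with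
`x, x + z, x − z ∈ W`, `v(x+z) + v(x−z) − 2v(x) ≤ C ‖z‖_M²`. -/
theorem value_function_semiconcave {d N : ℕ} (hd : 2 ≤ d) (hN : 2 ≤ N)
    (m : Fin N → ℝ) (hm : ∀ i, 0 < m i)
    (a : Conf d N) (ha : inOmega m a)
    (W V : Set (Conf d N)) (hV : IsOpen V) (hWV : W = V ∩ {x | inX m x})
    (hWcpt : IsCompact (closure W)) (hWΩ : closure W ⊆ {x | inOmega m x}) :
    ∃ C > (0:ℝ), ∀ x z : Conf d N, x ∈ W → x + z ∈ W → x - z ∈ W →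
      hypValue m a (x + z) + hypValue m a (x - z) - 2 * hypValue m a x ≤
        C * (mnorm m z) ^ 2 := by
  obtain ⟨C, hC, h⟩ := value_function_semiconcave_general hd hm ha hWcpt fun _ hx => hWΩ hx
  exact ⟨C, hC, fun x z hx hp hn =>
    h x z (subset_closure hx) (subset_closure hp) (subset_closure hn)⟩

end NBodyHJ
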